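/- arXiv:1502.03716 — 4 statements merged into one kernel-verified Lean document; each statement's English description precedes it below -/
import Mathlib

section
/- Lipschitz-type property of the block optimality measure: if x, y ∈ X are two vectors satisfying x_i = y_i for some i ∈ {1,…,N}, then |S_i(x) − S_i(y)| ≤ L_F · D_i · ‖A_i‖ · ‖A(x − y)‖. -/
/-!
For a fixed linearization `c`, the optimality measure at `u` is the maximum over `q ∈ K` of
`⟪c, u - q⟫ + φ u - φ q`. Each of these functions is `diam K`-Lipschitz in `c`, hence so is their
maximum. A block measure sees the rest of the point only through `c = A_i† (∇F (A x))`, which is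
`L_F ‖A_i‖`-Lipschitz in `A x`.
-/

open scoped RealInnerProductSpace BigOperators
noncomputable section

/-- The `i`-th block space `ℝ^{n_i}` (with the Euclidean norm). -/
abbrev Blk {N : ℕ} (nb : Fin N → ℕ) (i : Fin N) : Type := EuclideanSpace ℝ (Fin (nb i))

/-- The full space `ℝ^n`, `n = n_1 + ⋯ + n_N`, seen as the `ℓ²`-product of the blocks
(this is isometric to `ℝ^n` with the Euclidean norm, respecting the block structure). -/
abbrev FullSpc {N : ℕ} (nb : Fin N → ℕ) : Type := PiLp 2 fun i => Blk nb i

/-- The inclusion of the `i`-th block into the full space, i.e. the linear map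
`U_i` represented by the submatrix of the identity matrix corresponding to block `i`
(so that `x_i = U_iᵀ x` is simply `x i`). -/
def blkIncl {N : ℕ} (nb : Fin N → ℕ) (i : Fin N) : Blk nb i →L[ℝ] FullSpc nb :=
  LinearMap.toContinuousLinearMap
    (((WithLp.linearEquiv 2 ℝ (∀ i, Blk nb i)).symm.toLinearMap).comp
      (LinearMap.single ℝ (fun i => Blk nb i) i))

/-- `∇ f (x) = Aᵀ ∇F(Ax)` for `f = F ∘ A`. -/
def gradFull {N m : ℕ} (nb : Fin N → ℕ) (A : FullSpc nb →L[ℝ] EuclideanSpace ℝ (Fin m))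
    (gradF : EuclideanSpace ℝ (Fin m) → EuclideanSpace ℝ (Fin m)) (x : FullSpc nb) :
    FullSpc nb :=
  (ContinuousLinearMap.adjoint A) (gradF (A x))

/-- `∇_i f (x) = U_iᵀ ∇ f(x) = A_iᵀ ∇F(Ax)` where `A_i = A U_i`. -/
def gradBlk {N m : ℕ} (nb : Fin N → ℕ) (A : FullSpc nb →L[ℝ] EuclideanSpace ℝ (Fin m))
    (gradF : EuclideanSpace ℝ (Fin m) → EuclideanSpace ℝ (Fin m)) (i : Fin N) (x : FullSpc nb) :
    Blk nb i :=
  (ContinuousLinearMap.adjoint (A.comp (blkIncl nb i))) (gradF (A x))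

section FrankWolfeGap

variable {E : Type*} [SeminormedAddCommGroup E] [InnerProductSpace ℝ E]

/-- The generalized Frank–Wolfe gap (optimality measure) at `u` of the composite objective whose
smooth part has gradient `c` and whose nonsmooth part is `φ`. The answer `p` of the minimization
oracle for `⟪c, ·⟫ + φ` is a separate argument, as it need not be unique. -/
def frankWolfeGap (φ : E → ℝ) (c u p : E) : ℝ := ⟪c, u - p⟫ + φ u - φ p

theorem frankWolfeGap_le_of_isMinOn {K : Set E} {φ : E → ℝ} {c p q : E} (u : E)
    (hp : IsMinOn (fun r ↦ ⟪c, r⟫ + φ r) K p) (hq : q ∈ K) :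
    frankWolfeGap φ c u q ≤ frankWolfeGap φ c u p := by
  have hpq : ⟪c, p⟫ + φ p ≤ ⟪c, q⟫ + φ q := hp hq
  simp only [frankWolfeGap, inner_sub_right]
  linarith

theorem frankWolfeGap_sub_frankWolfeGap (φ : E → ℝ) (c d u p : E) :
    frankWolfeGap φ c u p - frankWolfeGap φ d u p = ⟪c - d, u - p⟫ := by
  simp only [frankWolfeGap, inner_sub_left]
  ring

theorem frankWolfeGap_sub_le {K : Set E} (hK : Bornology.IsBounded K) {φ : E → ℝ}
    {c d u p q : E} (hu : u ∈ K) (hp : p ∈ K) (hq : IsMinOn (fun r ↦ ⟪d, r⟫ + φ r) K q) :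
    frankWolfeGap φ c u p - frankWolfeGap φ d u q ≤ ‖c - d‖ * Metric.diam K :=
  calc
    frankWolfeGap φ c u p - frankWolfeGap φ d u q
      ≤ frankWolfeGap φ c u p - frankWolfeGap φ d u p :=
        sub_le_sub_left (frankWolfeGap_le_of_isMinOn u hq hp) _
    _ = ⟪c - d, u - p⟫ := frankWolfeGap_sub_frankWolfeGap φ c d u p
    _ ≤ ‖c - d‖ * ‖u - p‖ := real_inner_le_norm _ _
    _ ≤ ‖c - d‖ * Metric.diam K := by
        rw [← dist_eq_norm u p]
        gcongr
        exact Metric.dist_le_diam_of_mem hK hu hp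

theorem abs_frankWolfeGap_sub_le {K : Set E} (hK : Bornology.IsBounded K) {φ : E → ℝ}
    {c d u p q : E} (hu : u ∈ K)
    (hp : p ∈ K) (hp_min : IsMinOn (fun r ↦ ⟪c, r⟫ + φ r) K p)
    (hq : q ∈ K) (hq_min : IsMinOn (fun r ↦ ⟪d, r⟫ + φ r) K q) :
    |frankWolfeGap φ c u p - frankWolfeGap φ d u q| ≤ ‖c - d‖ * Metric.diam K := by
  refine abs_sub_le_iff.2 ⟨frankWolfeGap_sub_le hK hu hp hq_min, ?_⟩
  rw [norm_sub_rev]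
  exact frankWolfeGap_sub_le hK hu hq hp_min

end FrankWolfeGap

theorem norm_adjoint_apply_sub_le {𝕜 E H : Type*} [RCLike 𝕜]
    [NormedAddCommGroup E] [InnerProductSpace 𝕜 E] [CompleteSpace E]
    [NormedAddCommGroup H] [InnerProductSpace 𝕜 H] [CompleteSpace H] (T : E →L[𝕜] H) (a b : H) :
    ‖ContinuousLinearMap.adjoint T a - ContinuousLinearMap.adjoint T b‖ ≤ ‖T‖ * ‖a - b‖ := by
  rw [← map_sub, ← LinearIsometryEquiv.norm_map ContinuousLinearMap.adjoint T]
  exact ContinuousLinearMap.le_opNorm _ _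

section Blocks

variable {ι : Type*} [DecidableEq ι] {r : ENNReal} {E : ι → Type*}
  [∀ j, NormedAddCommGroup (E j)] [∀ j, InnerProductSpace ℝ (E j)]
  {H : Type*} [NormedAddCommGroup H] [InnerProductSpace ℝ H]

/-- The restriction `A_i = A U_i` of an operator on a product space to the `i`-th block. Only the
product topology of `PiLp r E` matters, so `ι` may be infinite and the exponent `r` is arbitrary. -/
def blockRestriction (A : PiLp r E →L[ℝ] H) (i : ι) : E i →L[ℝ] H :=
  A ∘L (PiLp.continuousLinearEquiv r ℝ E).symm ∘L ContinuousLinearMap.single ℝ E i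

variable [CompleteSpace H]

/-- The `i`-th block `A_i† (∇F (A x))` of the gradient of `F ∘ A` at `x`, where the map `gradF`
represents `∇F`. -/
def blockGradient (A : PiLp r E →L[ℝ] H) (gradF : H → H) (i : ι) [CompleteSpace (E i)]
    (x : PiLp r E) : E i :=
  ContinuousLinearMap.adjoint (blockRestriction A i) (gradF (A x))

theorem block_optimality_measure_lipschitz_general
    (A : PiLp r E →L[ℝ] H) {X : ∀ j, Set (E j)} {F : H → ℝ} {gradF : H → H}
    (_hgradF : ∀ x : PiLp r E, (∀ j, x j ∈ X j) → HasGradientAt F (gradF (A x)) (A x))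
    {LF : ℝ} (hLF : ∀ x : PiLp r E, (∀ j, x j ∈ X j) → ∀ y : PiLp r E, (∀ j, y j ∈ X j) →
      ‖gradF (A x) - gradF (A y)‖ ≤ LF * ‖A x - A y‖)
    {i : ι} [CompleteSpace (E i)] (hX : Bornology.IsBounded (X i)) {g : E i → ℝ}
    {p : PiLp r E → E i}
    (hp : ∀ x : PiLp r E, (∀ j, x j ∈ X j) →
      p x ∈ X i ∧ IsMinOn (fun q ↦ ⟪blockGradient A gradF i x, q⟫ + g q) (X i) (p x))
    {x y : PiLp r E} (hx : ∀ j, x j ∈ X j) (hy : ∀ j, y j ∈ X j) (hxy : x i = y i) :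
    |frankWolfeGap g (blockGradient A gradF i x) (x i) (p x) -
        frankWolfeGap g (blockGradient A gradF i y) (y i) (p y)| ≤
      LF * Metric.diam (X i) * ‖blockRestriction A i‖ * ‖A (x - y)‖ := by
  have gradient_lipschitz : ‖blockGradient A gradF i x - blockGradient A gradF i y‖ ≤
      ‖blockRestriction A i‖ * (LF * ‖A (x - y)‖) := by
    refine (norm_adjoint_apply_sub_le _ _ _).trans ?_
    rw [map_sub]
    gcongr
    exact hLF x hx y hy
  rw [← hxy]
  calc
    |frankWolfeGap g (blockGradient A gradF i x) (x i) (p x) -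
        frankWolfeGap g (blockGradient A gradF i y) (x i) (p y)|
      ≤ ‖blockGradient A gradF i x - blockGradient A gradF i y‖ * Metric.diam (X i) :=
        abs_frankWolfeGap_sub_le hX (hx i) (hp x hx).1 (hp x hx).2 (hp y hy).1 (hp y hy).2
    _ ≤ ‖blockRestriction A i‖ * (LF * ‖A (x - y)‖) * Metric.diam (X i) := by gcongr
    _ = LF * Metric.diam (X i) * ‖blockRestriction A i‖ * ‖A (x - y)‖ := by ring

end Blocks

/-- **Lipschitz-type property of the block optimality measure**: if `x, y ∈ X` satisfy
`x_i = y_i` for some `i`, then `|S_i(x) − S_i(y)| ≤ L_F · D_i · ‖A_i‖ · ‖A(x − y)‖`. -/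
theorem block_optimality_measure_lipschitz
    {N m : ℕ} (hN : 0 < N) (nb : Fin N → ℕ) (hnb : ∀ i, 0 < nb i)
    (A : FullSpc nb →L[ℝ] EuclideanSpace ℝ (Fin m))
    (Xi : ∀ i, Set (Blk nb i))
    (hXcpt : ∀ i, IsCompact (Xi i)) (hXconv : ∀ i, Convex ℝ (Xi i))
    (hXne : ∀ i, (Xi i).Nonempty)
    (D : Fin N → ℝ) (hD : ∀ i, Metric.diam (Xi i) = D i)
    (g : ∀ i, Blk nb i → ℝ) (hgconv : ∀ i, ConvexOn ℝ (Xi i) (g i))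
    (F : EuclideanSpace ℝ (Fin m) → ℝ)
    (hFconv : ConvexOn ℝ Set.univ F)
    (gradF : EuclideanSpace ℝ (Fin m) → EuclideanSpace ℝ (Fin m))
    (hgradF : ∀ x : FullSpc nb, (∀ i, x i ∈ Xi i) → HasGradientAt F (gradF (A x)) (A x))
    (LF : ℝ)
    (hLF : ∀ x : FullSpc nb, (∀ i, x i ∈ Xi i) → ∀ y : FullSpc nb, (∀ i, y i ∈ Xi i) →
      ‖gradF (A x) - gradF (A y)‖ ≤ LF * ‖A x - A y‖)
    -- blockwise linear-oracle selections `p_i(x) ∈ argmin_{p_i ∈ X_i} {⟨∇_i f(x), p_i⟩ + g_i(p_i)}`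
    (piSel : ∀ i : Fin N, FullSpc nb → Blk nb i)
    (hpiSel : ∀ (i : Fin N) (x : FullSpc nb), (∀ j, x j ∈ Xi j) →
      piSel i x ∈ Xi i ∧ ∀ q ∈ Xi i,
        ⟪gradBlk nb A gradF i x, piSel i x⟫ + g i (piSel i x) ≤
          ⟪gradBlk nb A gradF i x, q⟫ + g i q) :
    ∀ (i : Fin N) (x y : FullSpc nb), (∀ j, x j ∈ Xi j) → (∀ j, y j ∈ Xi j) →
      x i = y i →
      |(⟪gradBlk nb A gradF i x, x i - piSel i x⟫ + g i (x i) - g i (piSel i x)) -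
          (⟪gradBlk nb A gradF i y, y i - piSel i y⟫ + g i (y i) - g i (piSel i y))| ≤
        LF * D i * ‖A.comp (blkIncl nb i)‖ * ‖A (x - y)‖ := by
  intro i x y hx hy hxy
  exact hD i ▸ block_optimality_measure_lipschitz_general A hgradF hLF (hXcpt i).isBounded
    (hpiSel i) hx hy hxy
end
end

section
/- Descent inequality for CBCG with arbitrary stepsizes: for every k ≥ 0 and every i ∈ {1,…,N}, H(x^{k,i}) ≤ H(x^{k,i−1}) − α_i^k S_i(x^{k,i−1}) + ((α_i^k)² β_i / 2) ‖A_i(p_i^k − x_i^k)‖². -/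
open scoped RealInnerProductSpace BigOperators
noncomputable section

/-!
One step of the method moves a single block from `z i` towards `p` by the fraction `a`. Along the
corresponding segment the gradient of `F` is `β`-Lipschitz with respect to the starting point, so
`F` grows by at most its linearization plus `a² β / 2 · ‖A_i (p - z i)‖²`; convexity of `g i` bounds
the change of `g` by `a (g i p - g i (z i))`. The first-order terms add up to `-a` times the gap
towards `p`, and this gap is largest when `p` minimizes the linearized block problem. Finally, block
`i` is not touched before its own turn in a sweep, so `x^{k,i-1}` and `x^k` agree there.
-/

open Set

section DescentLemma

theorem le_add_mul_add_sq_of_hasDerivWithinAt_le {φ φ' : ℝ → ℝ} {a b c C : ℝ} (hab : a ≤ b)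
    (hφ : ∀ t ∈ Icc a b, HasDerivWithinAt φ (φ' t) (Icc a b) t)
    (hbound : ∀ t ∈ Icc a b, φ' t ≤ c + C * (t - a)) :
    φ b ≤ φ a + c * (b - a) + C / 2 * (b - a) ^ 2 := by
  let B : ℝ → ℝ := fun t ↦ φ a + c * (t - a) + C / 2 * (t - a) ^ 2
  have hB (t : ℝ) : HasDerivAt B (c + C * (t - a)) t := by
    have hsub : HasDerivAt (fun t ↦ t - a) 1 t := (hasDerivAt_id t).sub_const a
    refine (((hsub.const_mul c).const_add (φ a)).add
      ((hsub.pow 2).const_mul (C / 2))).congr_deriv ?_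
    ring
  exact image_le_of_deriv_right_le_deriv_boundary
    (fun t ht ↦ (hφ t ht).continuousWithinAt)
    (fun t ht ↦ (hφ t (Ico_subset_Icc_self ht)).mono_of_mem_nhdsWithin
      (Icc_mem_nhdsGE_of_mem ht))
    (by simp [B]) (fun t _ ↦ (hB t).continuousAt.continuousWithinAt)
    (fun t _ ↦ (hB t).hasDerivWithinAt)
    (fun t ht ↦ hbound t (Ico_subset_Icc_self ht)) (right_mem_Icc.2 hab)

variable {V : Type*} [NormedAddCommGroup V] [NormedSpace ℝ V]

theorem le_add_fderivWithin_add_sq_of_segment {F : V → ℝ} {F' : V → StrongDual ℝ V} {L : ℝ}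
    {x y : V} (hF : ∀ w ∈ segment ℝ x y, HasFDerivWithinAt F (F' w) (segment ℝ x y) w)
    (hL : ∀ w ∈ segment ℝ x y, ‖F' w - F' x‖ ≤ L * ‖w - x‖) :
    F y ≤ F x + F' x (y - x) + L / 2 * ‖y - x‖ ^ 2 := by
  let line : ℝ → V := AffineMap.lineMap x y
  have line_mem : MapsTo line (Icc 0 1) (segment ℝ x y) := fun t ht ↦
    lineMap_mem_segment ℝ x y ht
  have hderiv (t : ℝ) (ht : t ∈ Icc (0 : ℝ) 1) :
      HasDerivWithinAt (F ∘ line) (F' (line t) (y - x)) (Icc 0 1) t :=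
    (hF _ (line_mem ht)).comp_hasDerivWithinAt t AffineMap.hasDerivWithinAt_lineMap line_mem
  have hbound (t : ℝ) (ht : t ∈ Icc (0 : ℝ) 1) :
      F' (line t) (y - x) ≤ F' x (y - x) + L * ‖y - x‖ ^ 2 * t := by
    have hdist : ‖line t - x‖ = t * ‖y - x‖ := by
      simp [line, AffineMap.lineMap_apply, norm_smul, abs_of_nonneg ht.1]
    suffices (F' (line t) - F' x) (y - x) ≤ L * ‖y - x‖ ^ 2 * t by
      rwa [sub_apply, sub_le_iff_le_add'] at this
    calc (F' (line t) - F' x) (y - x)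
        ≤ ‖F' (line t) - F' x‖ * ‖y - x‖ :=
          (le_abs_self _).trans ((F' (line t) - F' x).le_opNorm _)
      _ ≤ L * ‖line t - x‖ * ‖y - x‖ := by gcongr; exact hL _ (line_mem ht)
      _ = L * ‖y - x‖ ^ 2 * t := by rw [hdist]; ring
  have hle : F y ≤ F x + F' x (y - x) + L * ‖y - x‖ ^ 2 / 2 := by
    simpa [line] using
      le_add_mul_add_sq_of_hasDerivWithinAt_le zero_le_one hderiv (by simpa using hbound)
  linarith

end DescentLemma

section LinearizedGap

variable {V : Type*} [NormedAddCommGroup V] [InnerProductSpace ℝ V]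

/-- The output `p` of a generalized linear minimization oracle: it minimizes `⟪c, ·⟫ + g`
over `S`. -/
def IsLinearMinimizer (S : Set V) (g : V → ℝ) (c p : V) : Prop :=
  p ∈ S ∧ IsMinOn (fun q ↦ ⟪c, q⟫ + g q) S p

/-- The decrease of `⟪c, ·⟫ + g` from `x` to `p`. With `c = ∇_i f(x)` and `p = p_i(x)` a linear
minimizer this is the optimality measure `S_i(x)`. -/
def linearizedGap (g : V → ℝ) (c x p : V) : ℝ :=
  ⟪c, x - p⟫ + g x - g p

theorem IsLinearMinimizer.linearizedGap_le {S : Set V} {g : V → ℝ} {c p q : V}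
    (hp : IsLinearMinimizer S g c p) (hq : q ∈ S) (x : V) :
    linearizedGap g c x q ≤ linearizedGap g c x p := by
  have hmin : ⟪c, p⟫ + g p ≤ ⟪c, q⟫ + g q := hp.2 hq
  simp only [linearizedGap, inner_sub_right]
  linarith

end LinearizedGap

section BlockStep

variable {ι : Type*} {E : ι → Type*}

/-- The product `X_1 × ⋯ × X_N` inside the `ℓ²`-product of the block spaces. -/
def blockBox (X : ∀ i, Set (E i)) : Set (PiLp 2 E) :=
  {x | ∀ i, x i ∈ X i}

/-- The composite objective `H(x) = F(Ax) + ∑ i, g_i(x_i)`. -/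
def compositeObjective [Fintype ι] {G : Type*} (F : G → ℝ) (A : PiLp 2 E → G) (g : ∀ i, E i → ℝ)
    (x : PiLp 2 E) : ℝ :=
  F (A x) + ∑ i, g i (x i)

variable [DecidableEq ι] [∀ i, NormedAddCommGroup (E i)] [∀ i, NormedSpace ℝ (E i)]

variable (E) in
/-- The inclusion `U_i` of the `i`-th block into the `ℓ²`-product of the blocks; for Euclidean
blocks it is definitionally `blkIncl`. -/
def blockIncl (i : ι) : E i →L[ℝ] PiLp 2 E :=
  (PiLp.continuousLinearEquiv 2 ℝ E).symm.toContinuousLinearMap ∘L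
    ContinuousLinearMap.single ℝ E i

@[simp]
theorem blockIncl_apply_self (i : ι) (h : E i) : blockIncl E i h i = h := by
  simp [blockIncl]

theorem blockIncl_apply_of_ne {i j : ι} (hji : j ≠ i) (h : E i) : blockIncl E i h j = 0 := by
  simp [blockIncl, hji]

/-- The conditional gradient update of the `i`-th block of `z` towards `p` with stepsize `a`. -/
def blockStep (z : PiLp 2 E) (i : ι) (p : E i) (a : ℝ) : PiLp 2 E :=
  z + a • blockIncl E i (p - z i)

theorem blockStep_apply_self (z : PiLp 2 E) (i : ι) (p : E i) (a : ℝ) :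
    blockStep z i p a i = AffineMap.lineMap (z i) p a := by
  simp [blockStep, AffineMap.lineMap_apply, add_comm]

theorem blockStep_apply_of_ne {i j : ι} (hji : j ≠ i) (z : PiLp 2 E) (p : E i) (a : ℝ) :
    blockStep z i p a j = z j := by
  simp [blockStep, blockIncl_apply_of_ne hji]

theorem blockStep_mem_blockBox {X : ∀ i, Set (E i)} {z : PiLp 2 E} {i : ι} {p : E i} {a : ℝ}
    (hX : Convex ℝ (X i)) (hz : z ∈ blockBox X) (hp : p ∈ X i) (ha : a ∈ Icc (0 : ℝ) 1) :
    blockStep z i p a ∈ blockBox X := by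
  intro j
  obtain rfl | hji := eq_or_ne j i
  · rw [blockStep_apply_self]
    exact hX.lineMap_mem (hz j) hp ha
  · rw [blockStep_apply_of_ne hji]
    exact hz j

theorem sum_blockStep_le [Fintype ι] {i : ι} {S : Set (E i)} {g : ∀ i, E i → ℝ} {z : PiLp 2 E}
    {p : E i} {a : ℝ} (hg : ConvexOn ℝ S (g i)) (hz : z i ∈ S) (hp : p ∈ S)
    (ha : a ∈ Icc (0 : ℝ) 1) :
    ∑ j, g j (blockStep z i p a j) ≤ ∑ j, g j (z j) + a * (g i p - g i (z i)) := by
  rw [← sub_le_iff_le_add', ← Finset.sum_sub_distrib,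
    Fintype.sum_eq_single i fun j hji ↦ by rw [blockStep_apply_of_ne hji, sub_self],
    blockStep_apply_self, AffineMap.lineMap_apply_module]
  have hconv := hg.2 hz hp (sub_nonneg.2 ha.2) ha.1 (sub_add_cancel 1 a)
  simp only [smul_eq_mul] at hconv
  linarith

variable {G : Type*} [NormedAddCommGroup G] [NormedSpace ℝ G]

theorem map_blockStep (A : PiLp 2 E →L[ℝ] G) (z : PiLp 2 E) (i : ι) (p : E i) (a : ℝ) :
    A (blockStep z i p a) = A z + a • (A ∘L blockIncl E i) (p - z i) := by
  simp [blockStep]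

/-- Points of the segment are images of shorter block steps, which are feasible by convexity. -/
theorem exists_mem_blockBox_of_mem_segment {X : ∀ i, Set (E i)} {z : PiLp 2 E} {i : ι} {p : E i}
    {a : ℝ} (A : PiLp 2 E →L[ℝ] G) (hX : Convex ℝ (X i)) (hz : z ∈ blockBox X) (hp : p ∈ X i)
    (ha : a ∈ Icc (0 : ℝ) 1) {w : G} (hw : w ∈ segment ℝ (A z) (A (blockStep z i p a))) :
    ∃ h : E i, z + blockIncl E i h ∈ blockBox X ∧ w = A (z + blockIncl E i h) := by
  rw [segment_eq_image'] at hw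
  obtain ⟨t, ht, rfl⟩ := hw
  refine ⟨(t * a) • (p - z i), ?_, by simp [map_blockStep, mul_smul]⟩
  rw [map_smul]
  exact blockStep_mem_blockBox hX hz hp ⟨mul_nonneg ht.1 ha.1, mul_le_one₀ ht.2 ha.1 ha.2⟩

end BlockStep

section BlockDescent

variable {ι : Type*} [DecidableEq ι] {E : ι → Type*} [∀ i, NormedAddCommGroup (E i)]
  [∀ i, InnerProductSpace ℝ (E i)] [∀ i, CompleteSpace (E i)]
  {G : Type*} [NormedAddCommGroup G] [InnerProductSpace ℝ G] [CompleteSpace G]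

/-- The block gradient `∇_i f(x) = A_iᵀ ∇F(Ax)` of `f = F ∘ A`, where `A_i = A U_i` and `gradF`
stands for `∇F`; for Euclidean blocks it is definitionally `gradBlk`. -/
def blockGrad (A : PiLp 2 E →L[ℝ] G) (gradF : G → G) (i : ι) (x : PiLp 2 E) : E i :=
  (ContinuousLinearMap.adjoint (A ∘L blockIncl E i)) (gradF (A x))

theorem map_blockStep_le_add_inner_add_sq {A : PiLp 2 E →L[ℝ] G} {X : ∀ i, Set (E i)} {F : G → ℝ}
    {gradF : G → G} {β : ℝ} {z : PiLp 2 E} {i : ι} {p : E i} {a : ℝ}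
    (hF : ∀ x ∈ blockBox X, HasGradientAt F (gradF (A x)) (A x))
    (hβ : ∀ h : E i, z + blockIncl E i h ∈ blockBox X →
      ‖gradF (A (z + blockIncl E i h)) - gradF (A z)‖ ≤ β * ‖(A ∘L blockIncl E i) h‖)
    (hX : Convex ℝ (X i)) (hz : z ∈ blockBox X) (hp : p ∈ X i) (ha : a ∈ Icc (0 : ℝ) 1) :
    F (A (blockStep z i p a)) ≤ F (A z) + a * ⟪blockGrad A gradF i z, p - z i⟫ +
      a ^ 2 * β / 2 * ‖(A ∘L blockIncl E i) (p - z i)‖ ^ 2 := by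
  have hdescent := le_add_fderivWithin_add_sq_of_segment (F := F) (L := β) (x := A z)
    (y := A (blockStep z i p a)) (F' := fun w ↦ InnerProductSpace.toDual ℝ G (gradF w)) ?_ ?_
  · rw [map_blockStep, add_sub_cancel_left, InnerProductSpace.toDual_apply_apply,
      real_inner_smul_right, norm_smul, Real.norm_eq_abs, mul_pow, sq_abs] at hdescent
    rw [blockGrad, ContinuousLinearMap.adjoint_inner_left, map_blockStep]
    exact hdescent.trans_eq (by ring)
  · intro w hw
    obtain ⟨h, hmem, rfl⟩ := exists_mem_blockBox_of_mem_segment A hX hz hp ha hw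
    exact (hF _ hmem).hasFDerivAt.hasFDerivWithinAt
  · intro w hw
    obtain ⟨h, hmem, rfl⟩ := exists_mem_blockBox_of_mem_segment A hX hz hp ha hw
    rw [← map_sub, LinearIsometryEquiv.norm_map, ← map_sub A, add_sub_cancel_left]
    exact hβ h hmem

theorem compositeObjective_blockStep_le [Fintype ι] {A : PiLp 2 E →L[ℝ] G} {X : ∀ i, Set (E i)}
    {F : G → ℝ} {gradF : G → G} {g : ∀ i, E i → ℝ} {β : ℝ} {z : PiLp 2 E} {i : ι} {p : E i} {a : ℝ}
    (hg : ConvexOn ℝ (X i) (g i))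
    (hF : ∀ x ∈ blockBox X, HasGradientAt F (gradF (A x)) (A x))
    (hβ : ∀ h : E i, z + blockIncl E i h ∈ blockBox X →
      ‖gradF (A (z + blockIncl E i h)) - gradF (A z)‖ ≤ β * ‖(A ∘L blockIncl E i) h‖)
    (hz : z ∈ blockBox X) (hp : p ∈ X i) (ha : a ∈ Icc (0 : ℝ) 1) :
    compositeObjective F A g (blockStep z i p a) ≤ compositeObjective F A g z -
      a * linearizedGap (g i) (blockGrad A gradF i z) (z i) p +
      a ^ 2 * β / 2 * ‖(A ∘L blockIncl E i) (p - z i)‖ ^ 2 := by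
  have hF_step := map_blockStep_le_add_inner_add_sq hF hβ hg.1 hz hp ha
  have hg_step := sum_blockStep_le hg (hz i) hp ha
  rw [← neg_sub (z i) p, inner_neg_right, neg_sub] at hF_step
  simp only [compositeObjective, linearizedGap]
  linarith

end BlockDescent

section Sweep

variable {N : ℕ} {E : Fin N → Type*} [∀ i, NormedAddCommGroup (E i)]
  [∀ i, NormedSpace ℝ (E i)] {y : ℕ → PiLp 2 E} {p : ∀ i, E i} {a : Fin N → ℝ}

theorem sweep_apply_of_le (hupd : ∀ i : Fin N, y (i + 1) = blockStep (y i) i (p i) (a i))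
    {j : Fin N} : ∀ {i : ℕ}, i ≤ j → y i j = y 0 j
  | 0, _ => rfl
  | i + 1, hi => by
    have hij : j ≠ ⟨i, by lia⟩ := by intro h; simp [h] at hi
    rw [hupd ⟨i, by lia⟩, blockStep_apply_of_ne hij]
    exact sweep_apply_of_le hupd (by lia)

theorem sweep_mem_blockBox {X : ∀ i, Set (E i)} (hX : ∀ i, Convex ℝ (X i)) (h0 : y 0 ∈ blockBox X)
    (hp : ∀ i, p i ∈ X i) (ha : ∀ i, a i ∈ Icc (0 : ℝ) 1)
    (hupd : ∀ i : Fin N, y (i + 1) = blockStep (y i) i (p i) (a i)) :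
    ∀ {i : ℕ}, i ≤ N → y i ∈ blockBox X
  | 0, _ => h0
  | i + 1, hi => by
    rw [hupd ⟨i, hi⟩]
    exact blockStep_mem_blockBox (hX _) (sweep_mem_blockBox hX h0 hp ha hupd (by lia)) (hp _) (ha _)

theorem sweeps_mem_blockBox {X : ∀ i, Set (E i)} {x : ℕ → PiLp 2 E} {y : ℕ → ℕ → PiLp 2 E}
    {p : ℕ → ∀ i, E i} {a : ℕ → Fin N → ℝ} (hX : ∀ i, Convex ℝ (X i)) (hx0 : x 0 ∈ blockBox X)
    (hy0 : ∀ k, y k 0 = x k) (hyN : ∀ k, x (k + 1) = y k N)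
    (hp : ∀ k i, p k i ∈ X i) (ha : ∀ k i, a k i ∈ Icc (0 : ℝ) 1)
    (hupd : ∀ k (i : Fin N), y k (i + 1) = blockStep (y k i) i (p k i) (a k i))
    (k : ℕ) {i : ℕ} (hi : i ≤ N) : y k i ∈ blockBox X := by
  have hx (k : ℕ) : x k ∈ blockBox X := by
    induction k with
    | zero => exact hx0
    | succ k ih =>
      rw [hyN]
      exact sweep_mem_blockBox hX (hy0 k ▸ ih) (hp k) (ha k) (hupd k) le_rfl
  exact sweep_mem_blockBox hX (hy0 k ▸ hx k) (hp k) (ha k) (hupd k) hi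

end Sweep

theorem cbcg_descent_inequality_general {N : ℕ} {E : Fin N → Type*}
    [∀ i, NormedAddCommGroup (E i)] [∀ i, InnerProductSpace ℝ (E i)] [∀ i, CompleteSpace (E i)]
    {G : Type*} [NormedAddCommGroup G] [InnerProductSpace ℝ G] [CompleteSpace G]
    (A : PiLp 2 E →L[ℝ] G) {X : ∀ i, Set (E i)} {g : ∀ i, E i → ℝ}
    (hg : ∀ i, ConvexOn ℝ (X i) (g i)) {F : G → ℝ} {gradF : G → G}
    (hF : ∀ x ∈ blockBox X, HasGradientAt F (gradF (A x)) (A x)) {β : Fin N → ℝ}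
    (hβ : ∀ i, ∀ z ∈ blockBox X, ∀ h : E i, z + blockIncl E i h ∈ blockBox X →
      ‖gradF (A (z + blockIncl E i h)) - gradF (A z)‖ ≤ β i * ‖(A ∘L blockIncl E i) h‖)
    {piSel : ∀ i, PiLp 2 E → E i}
    (hpiSel : ∀ i, ∀ z ∈ blockBox X,
      IsLinearMinimizer (X i) (g i) (blockGrad A gradF i z) (piSel i z))
    {x : ℕ → PiLp 2 E} {y : ℕ → ℕ → PiLp 2 E} {p : ℕ → ∀ i, E i} {α : ℕ → Fin N → ℝ}
    (hx0 : x 0 ∈ blockBox X) (hy0 : ∀ k, y k 0 = x k) (hyN : ∀ k, x (k + 1) = y k N)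
    (hα : ∀ k i, α k i ∈ Icc (0 : ℝ) 1)
    (hp : ∀ k (i : Fin N), IsLinearMinimizer (X i) (g i) (blockGrad A gradF i (y k i)) (p k i))
    (hupd : ∀ k (i : Fin N), y k (i + 1) = blockStep (y k i) i (p k i) (α k i))
    (k : ℕ) (i : Fin N) :
    compositeObjective F A g (y k (i + 1)) ≤ compositeObjective F A g (y k i) -
      α k i * linearizedGap (g i) (blockGrad A gradF i (y k i)) (y k i i) (piSel i (y k i)) +
      α k i ^ 2 * β i / 2 * ‖(A ∘L blockIncl E i) (p k i - x k i)‖ ^ 2 := by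
  have hy : y k i ∈ blockBox X := sweeps_mem_blockBox (fun i ↦ (hg i).1) hx0 hy0 hyN
    (fun k i ↦ (hp k i).1) hα hupd k i.isLt.le
  have hxy : y k i i = x k i := by rw [← hy0, sweep_apply_of_le (hupd k) le_rfl]
  have hstep := compositeObjective_blockStep_le (hg i) hF (hβ i _ hy) hy (hp k i).1 (hα k i)
  have hgap := (hp k i).linearizedGap_le (hpiSel i _ hy).1 (y k i i)
  rw [hupd, ← hxy]
  refine hstep.trans ?_
  gcongr
  exact (hα k i).1

/-- **Descent inequality for CBCG with arbitrary stepsizes**: for every `k ≥ 0` and every block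
`i`, `H(x^{k,i}) ≤ H(x^{k,i−1}) − α_i^k S_i(x^{k,i−1}) + ((α_i^k)² β_i / 2) ‖A_i(p_i^k − x_i^k)‖²`. -/
theorem cbcg_descent_inequality
    {N m : ℕ} (hN : 0 < N) (nb : Fin N → ℕ) (hnb : ∀ i, 0 < nb i)
    (A : FullSpc nb →L[ℝ] EuclideanSpace ℝ (Fin m))
    (Xi : ∀ i, Set (Blk nb i))
    (hXcpt : ∀ i, IsCompact (Xi i)) (hXconv : ∀ i, Convex ℝ (Xi i))
    (hXne : ∀ i, (Xi i).Nonempty)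
    (D : Fin N → ℝ) (hD : ∀ i, Metric.diam (Xi i) = D i)
    (g : ∀ i, Blk nb i → ℝ) (hgconv : ∀ i, ConvexOn ℝ (Xi i) (g i))
    (F : EuclideanSpace ℝ (Fin m) → ℝ)
    (hFconv : ConvexOn ℝ Set.univ F)
    (gradF : EuclideanSpace ℝ (Fin m) → EuclideanSpace ℝ (Fin m))
    (hgradF : ∀ x : FullSpc nb, (∀ i, x i ∈ Xi i) → HasGradientAt F (gradF (A x)) (A x))
    (LF : ℝ)
    (hLF : ∀ x : FullSpc nb, (∀ i, x i ∈ Xi i) → ∀ y : FullSpc nb, (∀ i, y i ∈ Xi i) →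
      ‖gradF (A x) - gradF (A y)‖ ≤ LF * ‖A x - A y‖)
    (β : Fin N → ℝ) (hβpos : ∀ i, 0 < β i)
    (hβ : ∀ (i : Fin N) (z : FullSpc nb), (∀ j, z j ∈ Xi j) →
      ∀ h : Blk nb i, (∀ j, (z + blkIncl nb i h) j ∈ Xi j) →
      ‖gradF (A (z + blkIncl nb i h)) - gradF (A z)‖ ≤ β i * ‖A.comp (blkIncl nb i) h‖)
    -- blockwise linear-oracle selections `p_i(x) ∈ argmin_{p_i ∈ X_i} {⟨∇_i f(x), p_i⟩ + g_i(p_i)}`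
    (piSel : ∀ i : Fin N, FullSpc nb → Blk nb i)
    (hpiSel : ∀ (i : Fin N) (z : FullSpc nb), (∀ j, z j ∈ Xi j) →
      piSel i z ∈ Xi i ∧ ∀ q ∈ Xi i,
        ⟪gradBlk nb A gradF i z, piSel i z⟫ + g i (piSel i z) ≤
          ⟪gradBlk nb A gradF i z, q⟫ + g i q)
    -- the CBCG iterates: `x k` is `x^k` and `y k i` is `x^{k,i}` for `0 ≤ i ≤ N`
    (x : ℕ → FullSpc nb) (y : ℕ → ℕ → FullSpc nb)
    (pk : ℕ → (i : Fin N) → Blk nb i) (α : ℕ → Fin N → ℝ)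
    (hx0 : ∀ i, x 0 i ∈ Xi i)
    (hy0 : ∀ k, y k 0 = x k)
    (hyN : ∀ k, x (k + 1) = y k N)
    (hα01 : ∀ k i, α k i ∈ Set.Icc (0 : ℝ) 1)
    (hpk : ∀ (k : ℕ) (i : Fin N), pk k i ∈ Xi i ∧ ∀ q ∈ Xi i,
      ⟪gradBlk nb A gradF i (y k i.val), pk k i⟫ + g i (pk k i) ≤
        ⟪gradBlk nb A gradF i (y k i.val), q⟫ + g i q)
    (hupd : ∀ (k : ℕ) (i : Fin N),
      y k (i.val + 1) = y k i.val + α k i • blkIncl nb i (pk k i - y k i.val i))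
    :
    ∀ (k : ℕ) (i : Fin N),
      F (A (y k (i.val + 1))) + ∑ j, g j (y k (i.val + 1) j) ≤
        F (A (y k i.val)) + ∑ j, g j (y k i.val j) -
          α k i * (⟪gradBlk nb A gradF i (y k i.val), y k i.val i - piSel i (y k i.val)⟫ +
            g i (y k i.val i) - g i (piSel i (y k i.val))) +
          (α k i) ^ 2 * β i / 2 * ‖A.comp (blkIncl nb i) (pk k i - x k i)‖ ^ 2 :=
  cbcg_descent_inequality_general A hgconv hgradF hβ hpiSel hx0 hy0 hyN hα01 hpk hupd
end
end

section
/- Technical sequence lemma for the predefined stepsize: let C > 0 and let (a_k)_{k≥0} and (b_k)_{k≥0} be real sequences with 0 ≤ a_k ≤ b_k for all k, satisfying a_{k+1} ≤ a_k − t_k b_k + (C/2) t_k² for all k ≥ 0, where t_k = 2/(k+2). Then (a) a_k ≤ 2C/(k+1) for all k ≥ 1; and (b) for every n ≥ 1, min_{k = ⌊n/2⌋,…,n} b_k ≤ 8C/n. -/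
/-!
Write `t k = 2 / (k + 2)` and `u k = 2 * C / (k + 1)`. Everything rests on the telescoping bound
`C / 2 * t k ^ 2 ≤ u k - u (k + 1)`. Since also `(1 - t k) * u k = 2 * u (k + 1) - u k`, the
sequence `u` is a supersolution of the recursion `x (k + 1) = (1 - t k) * x k + C / 2 * t k ^ 2`
satisfied as an inequality by `a`, whence `a k ≤ u k` for `k ≥ 1`; the initial value `a 0` is
forgotten because `t 0 = 1`. Moreover `t k * b k` is at most the decrease of the potential
`a k + u k`. Summing from `⌈n / 2⌉` to `n`, where the weights `t k` add up to at least
`(n + 1) / (n + 2)`, bounds a weighted average of the `b k`. Starting at `⌈n / 2⌉` rather than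
`⌊n / 2⌋` keeps the starting index positive, so that the bound on `a` applies there, even for
`n = 1`.
-/

open Finset

theorem exists_le_of_sum_mul_le_sum_mul {ι R : Type*} [Semiring R] [LinearOrder R]
    [IsStrictOrderedRing R] {s : Finset ι} {w x : ι → R} {y : R} (hs : s.Nonempty)
    (hw : ∀ i ∈ s, 0 < w i) (h : ∑ i ∈ s, w i * x i ≤ (∑ i ∈ s, w i) * y) : ∃ i ∈ s, x i ≤ y := by
  rw [sum_mul] at h
  obtain ⟨i, hi, hxy⟩ := exists_le_of_sum_le hs h
  exact ⟨i, hi, le_of_mul_le_mul_left hxy (hw i hi)⟩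

section OrderedField

variable {K : Type*} [Field K] [LinearOrder K] [IsStrictOrderedRing K]

/-- The predefined stepsize `t_k = 2 / (k + 2)` of the conditional gradient method, with values in
the field `K`. -/
def predefinedStepsize (K : Type*) [Field K] (k : ℕ) : K := 2 / ((k : K) + 2)

theorem predefinedStepsize_pos (k : ℕ) : 0 < predefinedStepsize K k := by
  unfold predefinedStepsize
  positivity

theorem predefinedStepsize_le_one (k : ℕ) : predefinedStepsize K k ≤ 1 :=
  div_le_one_of_le₀ (le_add_of_nonneg_left k.cast_nonneg) (by positivity)

theorem predefinedStepsize_antitone : Antitone (predefinedStepsize K) := by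
  intro k l hkl
  unfold predefinedStepsize
  gcongr

theorem one_sub_predefinedStepsize_mul (C : K) (k : ℕ) :
    (1 - predefinedStepsize K k) * (2 * C / (k + 1)) =
      2 * (2 * C / (k + 2)) - 2 * C / (k + 1) := by
  unfold predefinedStepsize
  field_simp
  ring

theorem mul_predefinedStepsize_sq_le {C : K} (hC : 0 ≤ C) (k : ℕ) :
    C / 2 * predefinedStepsize K k ^ 2 ≤ 2 * C / (k + 1) - 2 * C / (k + 2) := by
  have gap : 2 * C / (k + 1) - 2 * C / (k + 2) - C / 2 * predefinedStepsize K k ^ 2 =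
      2 * C / ((k + 1) * (k + 2) ^ 2) := by
    unfold predefinedStepsize
    field_simp
    ring
  rw [← sub_nonneg, gap]
  positivity

theorem add_one_div_add_two_le_sum_predefinedStepsize (n : ℕ) :
    ((n : K) + 1) / (n + 2) ≤ ∑ k ∈ Ico ((n + 1) / 2) (n + 1), predefinedStepsize K k := by
  have card_ge : (n : K) + 1 ≤ 2 * #(Ico ((n + 1) / 2) (n + 1)) := by
    rw [Nat.card_Ico]
    exact_mod_cast (by lia : n + 1 ≤ 2 * (n + 1 - (n + 1) / 2))
  calc ((n : K) + 1) / (n + 2)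
      ≤ 2 * #(Ico ((n + 1) / 2) (n + 1)) / (n + 2) := by gcongr
    _ = #(Ico ((n + 1) / 2) (n + 1)) • predefinedStepsize K n := by
      rw [nsmul_eq_mul, predefinedStepsize]
      ring
    _ ≤ ∑ k ∈ Ico ((n + 1) / 2) (n + 1), predefinedStepsize K k :=
      card_nsmul_le_sum _ _ _ fun k hk =>
        predefinedStepsize_antitone (Nat.le_of_lt_succ (mem_Ico.mp hk).2)

variable {C : K} {a b : ℕ → K}

theorem le_two_mul_div_of_succ_le (hC : 0 ≤ C)
    (hrec : ∀ k, a (k + 1) ≤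
      (1 - predefinedStepsize K k) * a k + C / 2 * predefinedStepsize K k ^ 2)
    {k : ℕ} (hk : 1 ≤ k) : a k ≤ 2 * C / (k + 1) := by
  induction k, hk using Nat.le_induction with
  | base =>
    have a_one_le : a 1 ≤ C / 2 := by simpa [predefinedStepsize] using hrec 0
    linarith
  | succ k _ ih =>
    calc a (k + 1)
        ≤ (1 - predefinedStepsize K k) * a k + C / 2 * predefinedStepsize K k ^ 2 := hrec k
      _ ≤ (1 - predefinedStepsize K k) * (2 * C / (k + 1)) +
          (2 * C / (k + 1) - 2 * C / (k + 2)) :=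
        add_le_add
          (mul_le_mul_of_nonneg_left ih (sub_nonneg.mpr (predefinedStepsize_le_one k)))
          (mul_predefinedStepsize_sq_le hC k)
      _ = 2 * C / ((k + 1 : ℕ) + 1) := by
        rw [one_sub_predefinedStepsize_mul]
        push_cast
        ring

theorem sum_predefinedStepsize_mul_le (hC : 0 ≤ C)
    (hrec : ∀ k, a (k + 1) ≤
      a k - predefinedStepsize K k * b k + C / 2 * predefinedStepsize K k ^ 2)
    {m n : ℕ} (hmn : m ≤ n) :
    ∑ k ∈ Ico m n, predefinedStepsize K k * b k ≤
      (a m + 2 * C / (m + 1)) - (a n + 2 * C / (n + 1)) := by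
  let potential : ℕ → K := fun k => a k + 2 * C / (k + 1)
  have decrease (k : ℕ) :
      predefinedStepsize K k * b k ≤ -(potential (k + 1) - potential k) := by
    have cast_succ : ((k + 1 : ℕ) : K) + 1 = k + 2 := by push_cast; ring
    simp only [potential, cast_succ]
    linarith [hrec k, mul_predefinedStepsize_sq_le hC k]
  calc ∑ k ∈ Ico m n, predefinedStepsize K k * b k
      ≤ ∑ k ∈ Ico m n, -(potential (k + 1) - potential k) := sum_le_sum fun k _ => decrease k
    _ = potential m - potential n := by rw [sum_neg_distrib, sum_Ico_sub _ hmn, neg_sub]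

theorem exists_le_eight_mul_div_add_one (hC : 0 ≤ C)
    (hrec : ∀ k, a (k + 1) ≤
      a k - predefinedStepsize K k * b k + C / 2 * predefinedStepsize K k ^ 2)
    {n : ℕ} (ha_mid : a ((n + 1) / 2) ≤ 2 * C / (((n + 1) / 2 : ℕ) + 1))
    (ha_end : 0 ≤ a (n + 1)) :
    ∃ k ∈ Ico ((n + 1) / 2) (n + 1), b k ≤ 8 * C / (n + 1) := by
  set m := (n + 1) / 2
  have hmn : m < n + 1 := by lia
  have n_le : (n : K) ≤ 2 * m := by exact_mod_cast (by lia : n ≤ 2 * m)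
  have last_nonneg : 0 ≤ 2 * C / (((n + 1 : ℕ) : K) + 1) := by positivity
  refine exists_le_of_sum_mul_le_sum_mul (nonempty_Ico.mpr hmn)
    (fun k _ => predefinedStepsize_pos (K := K) k) ?_
  calc ∑ k ∈ Ico m (n + 1), predefinedStepsize K k * b k
      ≤ (a m + 2 * C / (m + 1)) - (a (n + 1) + 2 * C / ((n + 1 : ℕ) + 1)) :=
        sum_predefinedStepsize_mul_le hC hrec hmn.le
    _ ≤ 8 * C / (2 * m + 2) := by
      have double : 8 * C / (2 * (m : K) + 2) = 2 * (2 * C / (m + 1)) := by field_simp; ring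
      linarith
    _ ≤ 8 * C / (n + 2) := by gcongr
    _ = (n + 1) / (n + 2) * (8 * C / (n + 1)) := by field_simp
    _ ≤ (∑ k ∈ Ico m (n + 1), predefinedStepsize K k) * (8 * C / (n + 1)) := by
      gcongr
      exact add_one_div_add_two_le_sum_predefinedStepsize n

theorem predefined_stepsize_sequence_lemma_general (ha : ∀ k, 0 ≤ a k) (hab : ∀ k, a k ≤ b k)
    (hrec : ∀ k, a (k + 1) ≤
      a k - predefinedStepsize K k * b k + C / 2 * predefinedStepsize K k ^ 2) :
    (∀ k : ℕ, 1 ≤ k → a k ≤ 2 * C / ((k : K) + 1)) ∧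
    (∀ n : ℕ, 1 ≤ n → ∃ k : ℕ, n / 2 ≤ k ∧ k ≤ n ∧ b k ≤ 8 * C / (n : K)) := by
  have scalar_rec (k : ℕ) : a (k + 1) ≤
      (1 - predefinedStepsize K k) * a k + C / 2 * predefinedStepsize K k ^ 2 := by
    linarith [hrec k, mul_le_mul_of_nonneg_left (hab k) (predefinedStepsize_pos (K := K) k).le]
  have hC : 0 ≤ C := by
    have a_one_le : a 1 ≤ C / 2 := by simpa [predefinedStepsize] using scalar_rec 0
    linarith [ha 1]
  have a_le {k : ℕ} (hk : 1 ≤ k) : a k ≤ 2 * C / (k + 1) :=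
    le_two_mul_div_of_succ_le hC scalar_rec hk
  refine ⟨fun k => a_le, fun n hn => ?_⟩
  obtain ⟨k, hk, hbk⟩ :=
    exists_le_eight_mul_div_add_one hC hrec (a_le (by lia : 1 ≤ (n + 1) / 2)) (ha (n + 1))
  rw [mem_Ico] at hk
  refine ⟨k, by lia, by lia, hbk.trans ?_⟩
  gcongr
  linarith

end OrderedField

/-- **Technical sequence lemma for the predefined stepsize** (cf. Beck 2012, Lemma 1):
if `0 ≤ a_k ≤ b_k`, `a_{k+1} ≤ a_k − t_k b_k + (C/2) t_k²` with `t_k = 2/(k+2)` and `C > 0`, then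
(a) `a_k ≤ 2C/(k+1)` for all `k ≥ 1`, and (b) for every `n ≥ 1`,
`min_{k = ⌊n/2⌋,…,n} b_k ≤ 8C/n`. -/
theorem predefined_stepsize_sequence_lemma
    (C : ℝ) (hC : 0 < C) (a b : ℕ → ℝ)
    (ha : ∀ k, 0 ≤ a k) (hab : ∀ k, a k ≤ b k)
    (hrec : ∀ k : ℕ, a (k + 1) ≤ a k - (2 / ((k : ℝ) + 2)) * b k +
      C / 2 * (2 / ((k : ℝ) + 2)) ^ 2) :
    (∀ k : ℕ, 1 ≤ k → a k ≤ 2 * C / ((k : ℝ) + 1)) ∧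
    (∀ n : ℕ, 1 ≤ n → ∃ k : ℕ, n / 2 ≤ k ∧ k ≤ n ∧ b k ≤ 8 * C / (n : ℝ)) :=
  predefined_stepsize_sequence_lemma_general ha hab hrec
end

section
/- Technical sequence lemma for the adaptive stepsize: let (a_k)_{k≥0} be a sequence of non-negative real numbers satisfying a_k − a_{k+1} ≥ γ a_k² for all k ≥ 0, and assume a_0 ≤ 1/(γ m) for some positive reals γ and m. Then for every k ≥ 0, a_k ≤ (1/γ) · 1/(m + k). -/
/-!
For positive terms, dividing `γ_k a_k² ≤ a_k - a_{k+1}` by `a_k a_{k+1}` gives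
`1 / a_{k+1} ≥ 1 / a_k + γ_k`, so the reciprocals grow at least as fast as the sums of the `γ_k`.
Cleared of denominators, this says that the bound `a_k (M + ∑ i < k, γ_i) ≤ 1` propagates from `k`
to `k + 1`: with `u = a_k (M + ∑ i < k, γ_i)` and `v = γ_k a_k`, the next product is at most
`(u + v) (1 - v)`, which is at most `1 - v²` when `v ≤ 1` and is nonpositive when `v > 1`.
-/

section OrderedRing

variable {R : Type*} [CommRing R] [LinearOrder R] [IsStrictOrderedRing R]

lemma mul_add_le_one_of_mul_sq_le_sub {x y c t : R} (hc : 0 ≤ c) (ht : 0 ≤ t)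
    (hxt : x * t ≤ 1) (hxy : c * x ^ 2 ≤ x - y) : y * (t + c) ≤ 1 := by
  have factored : y * (t + c) ≤ (x * t + c * x) * (1 - c * x) :=
    calc y * (t + c) ≤ (x - c * x ^ 2) * (t + c) :=
          mul_le_mul_of_nonneg_right (le_sub_comm.mp hxy) (add_nonneg ht hc)
      _ = (x * t + c * x) * (1 - c * x) := by ring
  refine factored.trans ?_
  rcases le_or_gt (c * x) 1 with hcx | hcx
  · calc (x * t + c * x) * (1 - c * x) ≤ (1 + c * x) * (1 - c * x) := by gcongr
      _ = 1 - (c * x) ^ 2 := by ring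
      _ ≤ 1 := sub_le_self 1 (sq_nonneg _)
  · have hx : 0 < x := pos_of_mul_pos_right (one_pos.trans hcx) hc
    calc (x * t + c * x) * (1 - c * x) ≤ 0 :=
          mul_nonpos_of_nonneg_of_nonpos (by positivity) (sub_nonpos.mpr hcx.le)
      _ ≤ 1 := zero_le_one

lemma mul_add_sum_le_one_of_mul_sq_le_sub {a γ : ℕ → R} {M : R} (hγ : ∀ k, 0 ≤ γ k)
    (hM : 0 ≤ M) (hrec : ∀ k, γ k * a k ^ 2 ≤ a k - a (k + 1)) (h0 : a 0 * M ≤ 1) (k : ℕ) :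
    a k * (M + ∑ i ∈ Finset.range k, γ i) ≤ 1 := by
  induction k with
  | zero => simpa using h0
  | succ k ih =>
    rw [Finset.sum_range_succ, ← add_assoc]
    exact mul_add_le_one_of_mul_sq_le_sub (hγ k)
      (add_nonneg hM (Finset.sum_nonneg fun i _ => hγ i)) ih (hrec k)

end OrderedRing

theorem adaptive_stepsize_sequence_lemma_general
    {K : Type*} [Field K] [LinearOrder K] [IsStrictOrderedRing K]
    {a γ : ℕ → K} {M : K} (hγ : ∀ k, 0 ≤ γ k) (hM : 0 < M)
    (hrec : ∀ k, γ k * a k ^ 2 ≤ a k - a (k + 1)) (h0 : a 0 ≤ 1 / M) (k : ℕ) :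
    a k ≤ 1 / (M + ∑ i ∈ Finset.range k, γ i) := by
  have hpos : 0 < M + ∑ i ∈ Finset.range k, γ i :=
    add_pos_of_pos_of_nonneg hM (Finset.sum_nonneg fun i _ => hγ i)
  rw [le_div_iff₀ hM] at h0
  rw [le_div_iff₀ hpos]
  exact mul_add_sum_le_one_of_mul_sq_le_sub hγ hM.le hrec h0 k

/-- **Technical sequence lemma for the adaptive stepsize** (cf. Beck–Tetruashvili 2013,
Lemma 3.5): if `(a_k)` is a sequence of non-negative reals with `a_k − a_{k+1} ≥ γ a_k²`
for all `k`, and `a_0 ≤ 1/(γ m)` for some positive `γ` and `m`, then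
`a_k ≤ (1/γ) · 1/(m + k)` for every `k`. -/
theorem adaptive_stepsize_sequence_lemma
    (a : ℕ → ℝ) (γ M : ℝ) (hγ : 0 < γ) (hM : 0 < M)
    (ha : ∀ k, 0 ≤ a k)
    (hrec : ∀ k : ℕ, γ * (a k) ^ 2 ≤ a k - a (k + 1))
    (h0 : a 0 ≤ 1 / (γ * M)) :
    ∀ k : ℕ, a k ≤ (1 / γ) * (1 / (M + (k : ℝ))) := by
  intro k
  simpa [← mul_inv, mul_add, mul_comm] using
    adaptive_stepsize_sequence_lemma_general (fun _ => hγ.le) (mul_pos hγ hM) hrec h0 k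
end
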